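/- Let f : V × V → W be a decomposable nondegenerate object of SSKE with V = V̄₁ ⊕ V̄₂, f(V̄₁, V̄₂) = 0, W̄ᵢ the span of f(V̄ᵢ, V̄ᵢ), and identify L_{f̄ᵢ} with the graded subspace V̄ᵢ ⊕ W̄ᵢ of L_f = V ⊕ W. Then L_{f̄₁} and L_{f̄₂} are Lie subsuperalgebras of L_f, L_f = L_{f̄₁} + L_{f̄₂}, [L_{f̄₁}, L_{f̄₂}] = 0, and L_{f̄₁} ∩ L_{f̄₂} = (L_{f̄₁})² ∩ (L_{f̄₂})² = W̄₁ ∩ W̄₂ ⊆ Z(L_f); that is, L_f is the central sum of L_{f̄₁} and L_{f̄₂}. -/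

import Mathlib

open TensorProduct

noncomputable section

/-- The sign `(−1)^{σ·τ}` (for degrees `σ τ : ℤ/2`) as an element of the field `F`. -/
def ssign (F : Type*) [Field F] (σ τ : ZMod 2) : F := (-1 : F) ^ (σ * τ).val

variable {F V W L : Type*}

section Defs

variable [Field F] [AddCommGroup V] [Module F V] [AddCommGroup W] [Module F W]
  [AddCommGroup L] [Module F L]

/-- `f : V × V → W` is an object of the category `SSKE`: a grading-preserving
skew-supersymmetric bilinear map between superspaces whose image spans `W`. -/
structure IsSSKE (gV : ZMod 2 → Submodule F V) (gW : ZMod 2 → Submodule F W)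
    (f : V →ₗ[F] V →ₗ[F] W) : Prop where
  internalV : DirectSum.IsInternal gV
  internalW : DirectSum.IsInternal gW
  grading : ∀ σ τ : ZMod 2, ∀ u ∈ gV σ, ∀ v ∈ gV τ, f u v ∈ gW (σ + τ)
  skew : ∀ σ τ : ZMod 2, ∀ u ∈ gV σ, ∀ v ∈ gV τ, f u v = -(ssign F σ τ) • f v u
  span_eq_top : Submodule.span F {w : W | ∃ u v : V, f u v = w} = ⊤

/-- A subspace `U` of a superspace is graded: `U = (U ∩ V₀) ⊕ (U ∩ V₁)`. -/
def IsGradedSub (gV : ZMod 2 → Submodule F V) (U : Submodule F V) : Prop :=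
  U = U ⊓ gV 0 ⊔ U ⊓ gV 1

/-- The subspace `X_g` of `V ⊗ W` (for the restriction of `g` to a subspace `U` of `V`),
spanned by all `(−1)^{|a||c|} a ⊗ g(b,c) + (−1)^{|b||a|} b ⊗ g(c,a) + (−1)^{|c||b|} c ⊗ g(a,b)`
with `a, b, c` homogeneous elements of `U`. For `U = ⊤` this is `X_g` itself. -/
def XFr (gV : ZMod 2 → Submodule F V) (U : Submodule F V)
    (g : V →ₗ[F] V →ₗ[F] W) : Submodule F (V ⊗[F] W) :=
  Submodule.span F {z : V ⊗[F] W | ∃ σ τ ρ : ZMod 2, ∃ a ∈ U ⊓ gV σ, ∃ b ∈ U ⊓ gV τ,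
    ∃ c ∈ U ⊓ gV ρ,
    z = ssign F σ ρ • (a ⊗ₜ[F] g b c) + ssign F τ σ • (b ⊗ₜ[F] g c a)
      + ssign F ρ τ • (c ⊗ₜ[F] g a b)}

/-- The epicenter `Z*(g)` of (the restriction to a subspace `U` of) a
skew-supersymmetric bilinear map `g`: all `w = g(u,v)` with `u, v` homogeneous in `U`
such that `(−1)^{|x||v|} x ⊗ w ∈ X_g` for every homogeneous `x ∈ U`. -/
def Zstar (gV : ZMod 2 → Submodule F V) (U : Submodule F V)
    (g : V →ₗ[F] V →ₗ[F] W) : Set W :=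
  {w : W | ∃ σ τ : ZMod 2, ∃ u ∈ U ⊓ gV σ, ∃ v ∈ U ⊓ gV τ, w = g u v ∧
    ∀ ρ : ZMod 2, ∀ x ∈ U ⊓ gV ρ, ssign F ρ τ • (x ⊗ₜ[F] w) ∈ XFr gV U g}

/-- The subspace `U ⊗ T` of `V ⊗ W`. -/
def tensSpan (U : Submodule F V) (T : Submodule F W) : Submodule F (V ⊗[F] W) :=
  Submodule.span F {z : V ⊗[F] W | ∃ u ∈ U, ∃ t ∈ T, z = u ⊗ₜ[F] t}

/-- The bracket of the Lie superalgebra `L_f = V ⊕ W`: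
`[(v,w),(v′,w′)] = (0, f(v,v′))`. -/
def superBracket (f : V →ₗ[F] V →ₗ[F] W) :
    (V × W) →ₗ[F] (V × W) →ₗ[F] (V × W) :=
  ((f.compl₂ (LinearMap.fst F V W)).compr₂ (LinearMap.inr F V W)).comp
    (LinearMap.fst F V W)

/-- The derived subalgebra `L² `: the span of all brackets. -/
def derivedSub (B : L →ₗ[F] L →ₗ[F] L) : Submodule F L :=
  Submodule.span F {z : L | ∃ x y : L, z = B x y}

/-- The span of all brackets of elements of a subspace `P`. -/
def derivedOn (B : L →ₗ[F] L →ₗ[F] L) (P : Submodule F L) : Submodule F L :=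
  Submodule.span F {z : L | ∃ x ∈ P, ∃ y ∈ P, z = B x y}

/-- The axioms of a Lie superalgebra: `L` with grading `gL`, an internal direct sum,
and a bilinear bracket `B` which preserves the grading and satisfies graded
skew-symmetry and the graded Jacobi identity. -/
structure IsLieSuper (gL : ZMod 2 → Submodule F L) (B : L →ₗ[F] L →ₗ[F] L) : Prop where
  internal : DirectSum.IsInternal gL
  grading : ∀ σ τ : ZMod 2, ∀ x ∈ gL σ, ∀ y ∈ gL τ, B x y ∈ gL (σ + τ)
  skew : ∀ σ τ : ZMod 2, ∀ x ∈ gL σ, ∀ y ∈ gL τ, B x y = -(ssign F σ τ) • B y x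
  jacobi : ∀ σ τ ρ : ZMod 2, ∀ x ∈ gL σ, ∀ y ∈ gL τ, ∀ z ∈ gL ρ,
    ssign F σ ρ • B x (B y z) + ssign F τ σ • B y (B z x)
      + ssign F ρ τ • B z (B x y) = 0

end Defs

theorem superBracket_apply_aux [Field F] [AddCommGroup V] [Module F V] [AddCommGroup W]
    [Module F W] (f : V →ₗ[F] V →ₗ[F] W) (x y : V × W) :
    superBracket f x y = (0, f x.1 y.1) := rfl

theorem derivedOn_aux [Field F] [AddCommGroup V] [Module F V] [AddCommGroup W] [Module F W]
    (f : V →ₗ[F] V →ₗ[F] W) (U : Submodule F V) (T : Submodule F W) :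
    derivedOn (superBracket f) (U.prod T) =
      (⊥ : Submodule F V).prod (Submodule.span F {w : W | ∃ u ∈ U, ∃ v ∈ U, w = f u v}) := by
  apply le_antisymm
  · refine Submodule.span_le.2 ?_
    rintro z ⟨x, hx, y, hy, rfl⟩
    rw [superBracket_apply_aux]
    exact ⟨Submodule.zero_mem _, Submodule.subset_span ⟨x.1, hx.1, y.1, hy.1, rfl⟩⟩
  · rintro ⟨a, b⟩ ⟨ha, hb⟩
    have ha' : a = 0 := by simpa using ha
    subst ha'
    have key : Submodule.span F {w : W | ∃ u ∈ U, ∃ v ∈ U, w = f u v} ≤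
        (derivedOn (superBracket f) (U.prod T)).comap (LinearMap.inr F V W) := by
      refine Submodule.span_le.2 ?_
      rintro w ⟨u, hu, v, hv, rfl⟩
      exact Submodule.subset_span
        ⟨(u, 0), ⟨hu, T.zero_mem⟩, (v, 0), ⟨hv, T.zero_mem⟩, rfl⟩
    exact key hb

theorem zero_swap_aux [Field F] [AddCommGroup V] [Module F V] [AddCommGroup W] [Module F W]
    (gV : ZMod 2 → Submodule F V) (gW : ZMod 2 → Submodule F W)
    (f : V →ₗ[F] V →ₗ[F] W) (hf : IsSSKE gV gW f) (V1 V2 : Submodule F V)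
    (hV1g : IsGradedSub gV V1) (hV2g : IsGradedSub gV V2)
    (hzero : ∀ u ∈ V1, ∀ v ∈ V2, f u v = 0) : ∀ u ∈ V2, ∀ v ∈ V1, f u v = 0 := by
  intro u hu v hv
  rw [hV2g] at hu
  rw [hV1g] at hv
  obtain ⟨u0, hu0, u1, hu1, rfl⟩ := Submodule.mem_sup.1 hu
  obtain ⟨v0, hv0, v1, hv1, rfl⟩ := Submodule.mem_sup.1 hv
  have h : ∀ σ τ : ZMod 2, ∀ a ∈ V2 ⊓ gV σ, ∀ b ∈ V1 ⊓ gV τ, f a b = 0 := by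
    intro σ τ a ha b hb
    rw [hf.skew σ τ a ha.2 b hb.2, hzero b hb.1 a ha.1, smul_zero]
  simp [h 0 0 u0 hu0 v0 hv0, h 0 1 u0 hu0 v1 hv1, h 1 0 u1 hu1 v0 hv0, h 1 1 u1 hu1 v1 hv1]

/-- For a decomposable nondegenerate object `f` of SSKE, the
subspaces `L_{f̄ᵢ} = V̄ᵢ ⊕ W̄ᵢ` of `L_f = V ⊕ W` are Lie subsuperalgebras,
`L_f = L_{f̄₁} + L_{f̄₂}`, `[L_{f̄₁}, L_{f̄₂}] = 0`, and
`L_{f̄₁} ∩ L_{f̄₂} = (L_{f̄₁})² ∩ (L_{f̄₂})² = W̄₁ ∩ W̄₂ ⊆ Z(L_f)`; that is,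
`L_f` is the central sum of `L_{f̄₁}` and `L_{f̄₂}`. -/
theorem stmt11 [Field F] [AddCommGroup V] [Module F V] [AddCommGroup W] [Module F W]
    [FiniteDimensional F V] [FiniteDimensional F W] [Nontrivial V] [Nontrivial W]
    (hchar2 : (2 : F) ≠ 0) (hchar3 : (3 : F) ≠ 0)
    (gV : ZMod 2 → Submodule F V) (gW : ZMod 2 → Submodule F W)
    (f : V →ₗ[F] V →ₗ[F] W) (hf : IsSSKE gV gW f)
    (V1 V2 : Submodule F V) (hV1ne : V1 ≠ ⊥) (hV2ne : V2 ≠ ⊥)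
    (hV1g : IsGradedSub gV V1) (hV2g : IsGradedSub gV V2)
    (hcompl : IsCompl V1 V2)
    (hzero : ∀ u ∈ V1, ∀ v ∈ V2, f u v = 0)
    (hnd : ∀ u : V, (∀ v : V, f v u = 0) → u = 0) :
    ∀ W1 W2 : Submodule F W,
      W1 = Submodule.span F {w : W | ∃ u ∈ V1, ∃ v ∈ V1, w = f u v} →
      W2 = Submodule.span F {w : W | ∃ u ∈ V2, ∃ v ∈ V2, w = f u v} →
      ∀ L1 L2 : Submodule F (V × W),
        L1 = V1.prod W1 → L2 = V2.prod W2 →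
        (∀ x ∈ L1, ∀ y ∈ L1, superBracket f x y ∈ L1) ∧
        (∀ x ∈ L2, ∀ y ∈ L2, superBracket f x y ∈ L2) ∧
        L1 ⊔ L2 = ⊤ ∧
        (∀ x ∈ L1, ∀ y ∈ L2, superBracket f x y = 0) ∧
        L1 ⊓ L2 = derivedOn (superBracket f) L1 ⊓ derivedOn (superBracket f) L2 ∧
        L1 ⊓ L2 = (⊥ : Submodule F V).prod (W1 ⊓ W2) ∧
        (∀ z ∈ L1 ⊓ L2, ∀ x : V × W, superBracket f z x = 0) := by
  intro W1 W2 hW1 hW2 L1 L2 hL1 hL2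
  have hzero' := zero_swap_aux gV gW f hf V1 V2 hV1g hV2g hzero
  have hd1 := derivedOn_aux f V1 W1
  have hd2 := derivedOn_aux f V2 W2
  rw [← hW1, ← hL1] at hd1
  rw [← hW2, ← hL2] at hd2
  have m1 : ∀ u ∈ V1, ∀ v ∈ V1, f u v ∈ W1 := by
    intro u hu v hv
    rw [hW1]
    exact Submodule.subset_span ⟨u, hu, v, hv, rfl⟩
  have m2 : ∀ u ∈ V2, ∀ v ∈ V2, f u v ∈ W2 := by
    intro u hu v hv
    rw [hW2]
    exact Submodule.subset_span ⟨u, hu, v, hv, rfl⟩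
  have hdec : ∀ v : V, ∃ a ∈ V1, ∃ b ∈ V2, a + b = v := by
    intro v
    have hv : v ∈ V1 ⊔ V2 := by
      rw [hcompl.sup_eq_top]
      exact Submodule.mem_top
    exact Submodule.mem_sup.1 hv
  have hW : W1 ⊔ W2 = ⊤ := by
    rw [eq_top_iff, ← hf.span_eq_top]
    refine Submodule.span_le.2 ?_
    rintro w ⟨u, v, rfl⟩
    obtain ⟨a, ha, b, hb, rfl⟩ := hdec u
    obtain ⟨c, hc, d, hd, rfl⟩ := hdec v
    have e : f (a + b) (c + d) = f a c + f b d := by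
      simp [hzero a ha d hd, hzero' b hb c hc]
    rw [e]
    exact Submodule.add_mem_sup (m1 a ha c hc) (m2 b hb d hd)
  have hinf : L1 ⊓ L2 = (⊥ : Submodule F V).prod (W1 ⊓ W2) := by
    rw [hL1, hL2, Submodule.prod_inf_prod, hcompl.inf_eq_bot]
  refine ⟨?_, ?_, ?_, ?_, ?_, hinf, ?_⟩
  · rw [hL1]
    intro x hx y hy
    exact ⟨V1.zero_mem, m1 _ hx.1 _ hy.1⟩
  · rw [hL2]
    intro x hx y hy
    exact ⟨V2.zero_mem, m2 _ hx.1 _ hy.1⟩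
  · rw [hL1, hL2, Submodule.prod_sup_prod, hcompl.sup_eq_top, hW, Submodule.prod_top]
  · rw [hL1, hL2]
    intro x hx y hy
    rw [superBracket_apply_aux, hzero _ hx.1 _ hy.1]
    rfl
  · rw [hinf, hd1, hd2, Submodule.prod_inf_prod, inf_idem]
  · rw [hinf]
    intro z hz x
    have h0 : z.1 = 0 := by simpa using hz.1
    rw [superBracket_apply_aux, h0, map_zero, LinearMap.zero_apply]
    rfl
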